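/- For every d ∈ ℕ there is a constant C_d > 0 such that: if α ∈ (0,1/2], ρ ∈ (0,1], and μ is a mean (α,ρ)-porous Borel probability measure on ℝ^d, then the upper packing dimension of μ satisfies udim_P(μ) ≤ d − C_d·ρ·α^d/|log α|. -/

import Mathlib

open MeasureTheory Filter Metric Set
open scoped Classical

/-- `por(μ,x,r,ε)`: the supremum of `α ≥ 0` such that some ball `B(y,αr) ⊆ B(x,r)` has
`μ(B(y,αr)) ≤ ε·μ(B(x,r))` (an "ε-hole" of relative size `α`). -/
noncomputable def porMeas {X : Type*} [MetricSpace X] [MeasurableSpace X]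
    (μ : Measure X) (x : X) (r ε : ℝ) : ℝ :=
  sSup {α : ℝ | 0 ≤ α ∧ ∃ y, Metric.ball y (α * r) ⊆ Metric.ball x r ∧
    μ (Metric.ball y (α * r)) ≤ ENNReal.ofReal ε * μ (Metric.ball x r)}

/-- `μ` is mean `(α,ρ)`-porous: for every `ε > 0`, at `μ`-a.e. point the lower asymptotic
proportion of scales `i` with `por(μ,x,2^{-i},ε) > α` is at least `ρ`. -/
def IsMeanPorous {X : Type*} [MetricSpace X] [MeasurableSpace X]
    (μ : Measure X) (α ρ : ℝ) : Prop :=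
  ∀ ε : ℝ, 0 < ε → ∀ᵐ x ∂μ,
    ρ ≤ Filter.liminf (fun n : ℕ =>
      (((Finset.range n).filter fun i => α < porMeas μ x ((2 : ℝ) ^ (-(i : ℤ))) ε).card : ℝ) / n)
      atTop

/-- The upper local dimension of a measure at a point. -/
noncomputable def upperLocalDim {X : Type*} [MetricSpace X] [MeasurableSpace X]
    (μ : Measure X) (x : X) : EReal :=
  Filter.limsup (fun r : ℝ =>
    ((Real.log (μ (Metric.ball x r)).toReal / Real.log r : ℝ) : EReal))
    (nhdsWithin 0 (Set.Ioi 0))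

/-- The upper packing dimension of a measure: the `μ`-essential supremum of the upper
local dimensions. -/
noncomputable def upperPackingDim {X : Type*} [MetricSpace X] [MeasurableSpace X]
    (μ : Measure X) : EReal :=
  essSup (upperLocalDim μ) μ

/-!
Split every cell of a nested sequence of partitions into at most `N` children, and compare `μ` with
the mass distribution `ν` that passes the proportion `1 / N` of the mass of a cell to each child.
By the Cauchy–Schwarz inequality the Hellinger integral of `μ` against `ν` does not increase with
the generation. When one child carries almost no `μ`-mass, Cauchy–Schwarz has room to spare, and
the proportions of that cell may be multiplied by `exp (1 / (4 * N))`. The Hellinger integrals stay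
bounded, so by the Borel–Cantelli lemma `N ^ n * μ (cell n x)` eventually exceeds
`exp (#{i < n | the cell of x in generation i has a sparse child} / (4 * N))`, up to a factor
`exp (τ * n)` with `τ` arbitrarily small.

In `ℝ^d` take dyadic cubes and skip `k` generations at a time, where `2 ^ k ≈ 1 / α`, so that
`N = 2 ^ (k * d) ≈ α ^ (-d)` up to factors depending on `d`. By the one-third trick, every ball lies
in a cube of comparable size in one of `2 ^ d` translated grids; a hole in the ball then contains a
descendant of that cube, `k` generations later, of small relative mass. By pigeonholing over the
grids and the residues of the scales modulo `k`, one of these finitely many partitions has a sparse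
child at a positive proportion of its generations, at least a constant multiple of `ρ`. So the mass
of a cube of side `2 ^ (-k * n)` is at least `2 ^ (-k * d * n) * exp (c * ρ * α ^ d * n)`, and
dividing by `k * log 2 ≈ |log α|` gives the dimension drop.
-/

section CauchySchwarz

variable {ι : Type*} {s : Finset ι} {a : ι → ℝ}

theorem sq_sum_sqrt_le_card_mul_sum (ha : ∀ i ∈ s, 0 ≤ a i) :
    (∑ i ∈ s, √(a i)) ^ 2 ≤ s.card * ∑ i ∈ s, a i :=
  calc (∑ i ∈ s, √(a i)) ^ 2 ≤ s.card * ∑ i ∈ s, √(a i) ^ 2 := sq_sum_le_card_mul_sum_sq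
    _ = s.card * ∑ i ∈ s, a i := by rw [Finset.sum_congr rfl fun i hi => Real.sq_sqrt (ha i hi)]

theorem sq_sum_sqrt_le_exp_mul_of_small_term {N : ℕ} (hN : s.card ≤ N) (ha : ∀ i ∈ s, 0 ≤ a i)
    {j : ι} (hj : j ∈ s) (hsmall : a j ≤ 1 / (8 * N) * ∑ i ∈ s, a i) :
    (∑ i ∈ s, √(a i)) ^ 2 ≤ Real.exp (-(1 / (4 * N))) * (N * ∑ i ∈ s, a i) := by
  have hcard : 0 < s.card := Finset.card_pos.2 ⟨j, hj⟩
  have hN₀ : (0 : ℝ) < N := by exact_mod_cast hcard.trans_le hN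
  set A := ∑ i ∈ s, a i
  set p := √(a j)
  set S := ∑ i ∈ s.erase j, √(a i)
  have hA : 0 ≤ A := Finset.sum_nonneg ha
  have hp : p ^ 2 ≤ 1 / (8 * N) * A := (Real.sq_sqrt (ha j hj)).trans_le hsmall
  have hS : S ^ 2 ≤ (N - 1) * A :=
    calc S ^ 2 ≤ (s.erase j).card * ∑ i ∈ s.erase j, a i :=
          sq_sum_sqrt_le_card_mul_sum fun i hi => ha i (Finset.mem_of_mem_erase hi)
      _ ≤ (s.card - 1 : ℕ) * A := by
          rw [Finset.card_erase_of_mem hj]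
          gcongr
          exact Finset.sum_le_sum_of_subset_of_nonneg (Finset.erase_subset j s)
            fun i hi _ => ha i hi
      _ ≤ (N - 1) * A := by
          rw [Nat.cast_sub hcard, Nat.cast_one]
          gcongr
  have amgm : 2 * p * S ≤ 2 * N * p ^ 2 + 1 / (2 * N) * S ^ 2 := by
    have h : 2 * N * p ^ 2 + 1 / (2 * N) * S ^ 2 - 2 * p * S = (2 * N * p - S) ^ 2 / (2 * N) := by
      field_simp
      ring
    have : 0 ≤ (2 * N * p - S) ^ 2 / (2 * N) := by positivity
    linarith
  calc (∑ i ∈ s, √(a i)) ^ 2 = (p + S) ^ 2 := by rw [← Finset.add_sum_erase s _ hj]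
    _ ≤ (1 + 2 * N) * p ^ 2 + (1 + 1 / (2 * N)) * S ^ 2 := by linarith [amgm, add_sq p S]
    _ ≤ (1 + 2 * N) * (1 / (8 * N) * A) + (1 + 1 / (2 * N)) * ((N - 1) * A) := by gcongr
    _ = (1 - 1 / (4 * N)) * (N * A) - 3 / (8 * N) * A := by field_simp; ring
    _ ≤ (1 - 1 / (4 * N)) * (N * A) := sub_le_self _ (by positivity)
    _ ≤ Real.exp (-(1 / (4 * N))) * (N * A) := by
        gcongr
        exact Real.one_sub_le_exp_neg _

end CauchySchwarz

theorem ae_eventually_lt_pow_of_lintegral_le {Ω : Type*} [MeasurableSpace Ω] {μ : Measure Ω}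
    {f : ℕ → Ω → ENNReal} (hf : ∀ n, AEMeasurable (f n) μ) {C q : ENNReal} (hC : C ≠ ⊤)
    (hq : 1 < q) (hq_top : q ≠ ⊤) (hle : ∀ n, ∫⁻ x, f n x ∂μ ≤ C) :
    ∀ᵐ x ∂μ, ∀ᶠ n : ℕ in atTop, f n x < q ^ n := by
  have hmarkov (n : ℕ) : μ {x | q ^ n ≤ f n x} ≤ C * q⁻¹ ^ n := by
    rw [← ENNReal.inv_pow, ← div_eq_mul_inv, ENNReal.le_div_iff_mul_le
      (.inl (pow_ne_zero n (zero_lt_one.trans hq).ne')) (.inl (ENNReal.pow_ne_top hq_top)),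
      mul_comm]
    exact (mul_meas_ge_le_lintegral₀ (hf n) _).trans (hle n)
  have hsum : ∑' n, μ {x | q ^ n ≤ f n x} ≠ ⊤ := by
    refine ne_top_of_le_ne_top ?_ (ENNReal.tsum_le_tsum hmarkov)
    rw [ENNReal.tsum_mul_left, ENNReal.tsum_geometric]
    exact ENNReal.mul_ne_top hC
      (ENNReal.inv_ne_top.2 (tsub_pos_of_lt (ENNReal.inv_lt_one.2 hq)).ne')
  filter_upwards [ae_eventually_notMem hsum] with x hx
  filter_upwards [hx] with n hn
  exact not_le.1 hn

/-- A sequence of nested partitions of `Ω` in which every cell is the union of at most `N` cells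
of the next partition. The cell of generation `n` containing `x` is addressed by `index n x`; the
generations share one type `ι` of addresses, and `children` does not depend on the generation. -/
structure NestedPartition (Ω ι : Type*) [MeasurableSpace Ω] [MeasurableSpace ι] (N : ℕ) where
  index : ℕ → Ω → ι
  measurable_index : ∀ n, Measurable (index n)
  children : ι → Finset ι
  index_succ_mem_children : ∀ {n x m}, index (n + 1) x ∈ children m ↔ index n x = m
  card_children_le : ∀ m, (children m).card ≤ N

namespace NestedPartition

variable {Ω ι : Type*} [MeasurableSpace Ω] [MeasurableSpace ι] {N : ℕ}
  (T : NestedPartition Ω ι N) (μ : Measure Ω)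

/-- The set of points whose address in generation `n` is `m`, possibly empty. -/
def cell (n : ℕ) (m : ι) : Set Ω := T.index n ⁻¹' {m}

/-- The cell of generation `n` with address `m` has a child of relative mass at most `ε`. -/
def HasSparseChild (ε : ℝ) (n : ℕ) (m : ι) : Prop :=
  ∃ m' ∈ T.children m, μ.real (T.cell (n + 1) m') ≤ ε * μ.real (T.cell n m)

/-- The integrand of the Hellinger integral, in generation `l + n`, of `μ` against the mass
distribution which gives mass one to each cell of generation `l` and in which a cell of generation
`i ≥ l` with address `m` passes the proportion `v i m` of its mass to each of its children. -/
noncomputable def hellinger (v : ℕ → ι → ℝ) (l n : ℕ) (x : Ω) : ℝ :=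
  √((∏ i ∈ Finset.range n, v (l + i) (T.index (l + i) x)) /
    μ.real (T.cell (l + n) (T.index (l + n) x)))

variable {T μ}

theorem mem_cell {n : ℕ} {m : ι} {x : Ω} : x ∈ T.cell n m ↔ T.index n x = m := Iff.rfl

theorem cell_eq_biUnion_children (n : ℕ) (m : ι) :
    T.cell n m = ⋃ m' ∈ T.children m, T.cell (n + 1) m' := by
  ext x
  simp [mem_cell, T.index_succ_mem_children]

theorem pairwiseDisjoint_cell (n : ℕ) (S : Set ι) : S.PairwiseDisjoint (T.cell n) :=
  pairwiseDisjoint_fiber (T.index n) S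

theorem hellinger_zero {v : ℕ → ι → ℝ} {l : ℕ} {m : ι} {x : Ω} (hx : x ∈ T.cell l m) :
    T.hellinger μ v l 0 x = (√(μ.real (T.cell l m)))⁻¹ := by
  simp [hellinger, mem_cell.1 hx]

theorem hellinger_succ {v : ℕ → ι → ℝ} (hv : ∀ n m, 0 ≤ v n m) {l n : ℕ} {m : ι} {x : Ω}
    (hx : x ∈ T.cell l m) :
    T.hellinger μ v l (n + 1) x = √(v l m) * T.hellinger μ v (l + 1) n x := by
  simp only [hellinger, Finset.prod_range_succ', add_zero, mem_cell.1 hx, add_assoc l 1,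
    add_comm 1]
  rw [mul_comm, mul_div_assoc, Real.sqrt_mul (hv l m)]

theorem ae_measureReal_cell_index_pos [Countable ι] (hfin : ∀ n m, μ (T.cell n m) ≠ ⊤) :
    ∀ᵐ x ∂μ, ∀ n, 0 < μ.real (T.cell n (T.index n x)) := by
  have hnull : μ (⋃ n, ⋃ m, ⋃ (_ : μ (T.cell n m) = 0), T.cell n m) = 0 := by
    simp only [measure_iUnion_null_iff, imp_self, implies_true]
  filter_upwards [measure_eq_zero_iff_ae_notMem.1 hnull] with x hx n
  refine ENNReal.toReal_pos (fun h => hx ?_) (hfin n _)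
  exact mem_iUnion.2 ⟨n, mem_iUnion₂.2 ⟨_, h, mem_cell.2 rfl⟩⟩

variable [MeasurableSingletonClass ι]

theorem measurableSet_cell (n : ℕ) (m : ι) : MeasurableSet (T.cell n m) :=
  T.measurable_index n (measurableSet_singleton m)

theorem sum_measureReal_children (hfin : ∀ n m, μ (T.cell n m) ≠ ⊤) (n : ℕ) (m : ι) :
    ∑ m' ∈ T.children m, μ.real (T.cell (n + 1) m') = μ.real (T.cell n m) := by
  rw [cell_eq_biUnion_children, measureReal_biUnion_finset (pairwiseDisjoint_cell _ _)
    (fun m' _ => measurableSet_cell _ m') (fun m' _ => hfin _ m')]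

theorem measurable_hellinger [Countable ι] (v : ℕ → ι → ℝ) (l n : ℕ) :
    Measurable (T.hellinger μ v l n) := by
  refine ((Finset.measurable_fun_prod _ fun i _ => ?_).div ?_).sqrt
  · exact (measurable_of_countable (v (l + i))).comp (T.measurable_index (l + i))
  · exact (measurable_of_countable fun m => μ.real (T.cell (l + n) m)).comp
      (T.measurable_index (l + n))

theorem setLIntegral_hellinger_le (hfin : ∀ n m, μ (T.cell n m) ≠ ⊤) {v : ℕ → ι → ℝ}
    (hv : ∀ n m, 0 ≤ v n m)
    (hstep : ∀ n m, v n m * (∑ m' ∈ T.children m, √(μ.real (T.cell (n + 1) m'))) ^ 2 ≤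
      μ.real (T.cell n m)) (n l : ℕ) (m : ι) :
    ∫⁻ x in T.cell l m, ENNReal.ofReal (T.hellinger μ v l n x) ∂μ ≤
      ENNReal.ofReal √(μ.real (T.cell l m)) := by
  induction n generalizing l m with
  | zero =>
    refine Eq.le ?_
    calc ∫⁻ x in T.cell l m, ENNReal.ofReal (T.hellinger μ v l 0 x) ∂μ
        = ∫⁻ _ in T.cell l m, ENNReal.ofReal (√(μ.real (T.cell l m)))⁻¹ ∂μ :=
          setLIntegral_congr_fun (measurableSet_cell l m) fun x hx => by rw [hellinger_zero hx]
      _ = ENNReal.ofReal √(μ.real (T.cell l m)) := by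
          rw [setLIntegral_const, ← ofReal_measureReal (hfin l m),
            ← ENNReal.ofReal_mul (by positivity), inv_mul_eq_div, Real.div_sqrt]
  | succ n ih =>
    calc ∫⁻ x in T.cell l m, ENNReal.ofReal (T.hellinger μ v l (n + 1) x) ∂μ
        = ∫⁻ x in T.cell l m, ENNReal.ofReal √(v l m) *
            ENNReal.ofReal (T.hellinger μ v (l + 1) n x) ∂μ :=
          setLIntegral_congr_fun (measurableSet_cell l m) fun x hx => by
            rw [hellinger_succ hv hx, ENNReal.ofReal_mul (Real.sqrt_nonneg _)]
      _ = ENNReal.ofReal √(v l m) * ∑ m' ∈ T.children m, ∫⁻ x in T.cell (l + 1) m',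
            ENNReal.ofReal (T.hellinger μ v (l + 1) n x) ∂μ := by
          rw [lintegral_const_mul' _ _ ENNReal.ofReal_ne_top, cell_eq_biUnion_children,
            lintegral_biUnion_finset (pairwiseDisjoint_cell _ _)
              (fun m' _ => measurableSet_cell _ m')]
      _ ≤ ENNReal.ofReal √(v l m) *
            ∑ m' ∈ T.children m, ENNReal.ofReal √(μ.real (T.cell (l + 1) m')) := by
          gcongr with m' _
          exact ih (l + 1) m'
      _ = ENNReal.ofReal (√(v l m) * ∑ m' ∈ T.children m, √(μ.real (T.cell (l + 1) m'))) := by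
          rw [ENNReal.ofReal_mul (Real.sqrt_nonneg _),
            ENNReal.ofReal_sum_of_nonneg fun _ _ => Real.sqrt_nonneg _]
      _ ≤ ENNReal.ofReal √(μ.real (T.cell l m)) := by
          gcongr
          refine Real.le_sqrt_of_sq_le ?_
          rw [mul_pow, Real.sq_sqrt (hv l m)]
          exact hstep l m

theorem exp_div_mul_sq_sum_sqrt_children_le (hfin : ∀ n m, μ (T.cell n m) ≠ ⊤) (n : ℕ) (m : ι) :
    Real.exp (if T.HasSparseChild μ (1 / (8 * N)) n m then 1 / (4 * N) else 0) / N *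
      (∑ m' ∈ T.children m, √(μ.real (T.cell (n + 1) m'))) ^ 2 ≤ μ.real (T.cell n m) := by
  have hnonneg (m' : ι) (_ : m' ∈ T.children m) : 0 ≤ μ.real (T.cell (n + 1) m') :=
    measureReal_nonneg
  rw [div_mul_eq_mul_div]
  refine div_le_of_le_mul₀ N.cast_nonneg measureReal_nonneg ?_
  rw [mul_comm (μ.real _), ← le_div_iff₀' (Real.exp_pos _), div_eq_inv_mul, ← Real.exp_neg,
    ← sum_measureReal_children hfin]
  split_ifs with hsparse
  · obtain ⟨m', hm', hle⟩ := hsparse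
    rw [← sum_measureReal_children hfin n m] at hle
    exact sq_sum_sqrt_le_exp_mul_of_small_term (T.card_children_le m) hnonneg hm' hle
  · rw [neg_zero, Real.exp_zero, one_mul]
    refine (sq_sum_sqrt_le_card_mul_sum hnonneg).trans ?_
    gcongr
    exact T.card_children_le m

theorem ae_eventually_hellinger_lt_exp [Countable ι] (hfin : ∀ n m, μ (T.cell n m) ≠ ⊤)
    {v : ℕ → ι → ℝ} (hv : ∀ n m, 0 ≤ v n m)
    (hstep : ∀ n m, v n m * (∑ m' ∈ T.children m, √(μ.real (T.cell (n + 1) m'))) ^ 2 ≤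
      μ.real (T.cell n m)) {τ : ℝ} (hτ : 0 < τ) :
    ∀ᵐ x ∂μ, ∀ᶠ n : ℕ in atTop, T.hellinger μ v 0 n x < Real.exp (τ * n) := by
  have hcover : ⋃ m, T.cell 0 m = univ := iUnion_eq_univ_iff.2 fun x => ⟨_, mem_cell.2 rfl⟩
  suffices h : ∀ᵐ x ∂μ.restrict (⋃ m, T.cell 0 m), ∀ᶠ n : ℕ in atTop,
      T.hellinger μ v 0 n x < Real.exp (τ * n) by
    rwa [hcover, Measure.restrict_univ] at h
  refine (ae_restrict_iUnion_iff _ _).2 fun m => ?_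
  filter_upwards [ae_eventually_lt_pow_of_lintegral_le
    (fun n => (measurable_hellinger v 0 n).ennreal_ofReal.aemeasurable) ENNReal.ofReal_ne_top
    (ENNReal.one_lt_ofReal.2 (Real.one_lt_exp_iff.2 hτ)) ENNReal.ofReal_ne_top
    (fun n => setLIntegral_hellinger_le hfin hv hstep n 0 m)] with x hx
  filter_upwards [hx] with n hn
  rwa [← ENNReal.ofReal_pow (Real.exp_pos τ).le, ← Real.exp_nat_mul, mul_comm,
    ENNReal.ofReal_lt_ofReal_iff (Real.exp_pos _)] at hn

theorem ae_eventually_exp_le_pow_mul_measureReal_cell [Countable ι] [NeZero N]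
    (hfin : ∀ n m, μ (T.cell n m) ≠ ⊤) {τ : ℝ} (hτ : 0 < τ) :
    ∀ᵐ x ∂μ, ∀ᶠ n : ℕ in atTop,
      Real.exp (1 / (4 * N) * ((Finset.range n).filter fun i =>
          T.HasSparseChild μ (1 / (8 * N)) i (T.index i x)).card - τ * n) ≤
        (N : ℝ) ^ n * μ.real (T.cell n (T.index n x)) := by
  have hN : (0 : ℝ) < N := by exact_mod_cast NeZero.pos N
  filter_upwards [ae_eventually_hellinger_lt_exp hfin (fun n m => by positivity)
    (exp_div_mul_sq_sum_sqrt_children_le hfin) (half_pos hτ),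
    ae_measureReal_cell_index_pos hfin] with x hx hpos
  filter_upwards [hx] with n hn
  have hprod : ∏ i ∈ Finset.range n, Real.exp (if T.HasSparseChild μ (1 / (8 * N)) i (T.index i x)
      then 1 / (4 * N) else 0) / N = Real.exp (1 / (4 * N) * ((Finset.range n).filter fun i =>
        T.HasSparseChild μ (1 / (8 * N)) i (T.index i x)).card) / N ^ n := by
    rw [Finset.prod_div_distrib, ← Real.exp_sum, Finset.prod_const, Finset.card_range,
      ← Finset.sum_filter, Finset.sum_const, nsmul_eq_mul, mul_comm]
  have hexp : Real.exp (τ / 2 * n) ^ 2 = Real.exp (τ * n) := by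
    rw [← Real.exp_nat_mul]
    congr 1
    push_cast
    ring
  simp only [hellinger, zero_add, hprod] at hn
  rw [Real.sqrt_lt' (Real.exp_pos _), hexp, div_div, div_lt_iff₀ (mul_pos (by positivity) (hpos n))]
    at hn
  rw [Real.exp_sub, div_le_iff₀' (Real.exp_pos _)]
  exact hn.le

end NestedPartition

theorem div_pow_floor_add_le_exp_neg {b : ℝ} (hb : 1 < b) {D : ℝ} {M : ℕ} (hD : D ≤ b ^ M)
    (y : ℝ) : D / b ^ (⌊(Real.log b)⁻¹ * y⌋₊ + 1 + M) ≤ Real.exp (-y) := by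
  have : 0 < b := zero_lt_one.trans hb
  have hlog : 0 < Real.log b := Real.log_pos hb
  have hy : Real.exp y ≤ b ^ (⌊(Real.log b)⁻¹ * y⌋₊ + 1) := by
    rw [← Real.le_log_iff_exp_le (by positivity), Real.log_pow, ← div_le_iff₀ hlog, div_eq_inv_mul]
    exact_mod_cast (Nat.lt_floor_add_one _).le
  rw [pow_add, div_le_iff₀ (by positivity)]
  calc D = Real.exp (-y) * (Real.exp y * D) := by rw [← mul_assoc, ← Real.exp_add]; simp
    _ ≤ Real.exp (-y) * (Real.exp y * b ^ M) := by gcongr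
    _ ≤ Real.exp (-y) * (b ^ (⌊(Real.log b)⁻¹ * y⌋₊ + 1) * b ^ M) := by gcongr

theorem upperLocalDim_le_of_eventually_exp_neg_le {X : Type*} [MetricSpace X] [MeasurableSpace X]
    {μ : Measure X} [IsLocallyFiniteMeasure μ] {x : X} {b D s : ℝ} (hb : 1 < b)
    (h : ∀ᶠ n : ℕ in atTop, Real.exp (-(s * n)) ≤ μ.real (ball x (D / b ^ n))) :
    upperLocalDim μ x ≤ ((s / Real.log b : ℝ) : EReal) := by
  have hlog : 0 < Real.log b := Real.log_pos hb
  obtain ⟨M, hM⟩ := pow_unbounded_of_one_lt D hb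
  set N : ℝ → ℕ := fun y => ⌊(Real.log b)⁻¹ * y⌋₊ + 1 + M with hN
  have hneglog : Tendsto (fun r => -Real.log r) (nhdsWithin 0 (Ioi 0)) atTop :=
    tendsto_neg_atBot_atTop.comp Real.tendsto_log_nhdsGT_zero
  have hratio : Tendsto (fun y => s * (N y / y)) atTop (nhds (s / Real.log b)) := by
    have hfloor := tendsto_nat_floor_mul_div_atTop (R := ℝ) (inv_nonneg.2 hlog.le)
    have hconst := tendsto_const_nhds (x := (1 + M : ℝ)).div_atTop tendsto_id
    have hsum := (hfloor.add hconst).const_mul s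
    rw [add_zero, ← div_eq_mul_inv] at hsum
    refine hsum.congr fun y => ?_
    simp only [hN, id, ← add_div]
    push_cast
    ring
  have hNtop : Tendsto N atTop atTop :=
    tendsto_atTop_mono (fun y => (Nat.le_succ _).trans (Nat.le_add_right _ M))
      (tendsto_nat_floor_atTop.comp (tendsto_id.const_mul_atTop (inv_pos.2 hlog)))
  obtain ⟨δ, hδ, hfin⟩ := (μ.finiteAt_nhds x).exists_mem_basis Metric.nhds_basis_ball
  refine (limsup_le_limsup ?_).trans_eq
    ((continuous_coe_real_ereal.tendsto _).comp (hratio.comp hneglog)).limsup_eq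
  filter_upwards [(hNtop.comp hneglog).eventually h, hneglog.eventually_gt_atTop 0,
    Ioo_mem_nhdsGT hδ] with r hmass hlog_pos hr
  have hball : ball x (D / b ^ N (-Real.log r)) ⊆ ball x r := by
    refine ball_subset_ball ((div_pow_floor_add_le_exp_neg hb hM.le _).trans_eq ?_)
    rw [neg_neg, Real.exp_log hr.1]
  have hle : Real.exp (-(s * N (-Real.log r))) ≤ μ.real (ball x r) :=
    hmass.trans <| measureReal_mono hball <|
      ((measure_mono (ball_subset_ball hr.2.le)).trans_lt hfin).ne
  have hlog_le : -Real.log (μ.real (ball x r)) ≤ s * N (-Real.log r) :=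
    neg_le.1 ((Real.le_log_iff_exp_le ((Real.exp_pos _).trans_le hle)).2 hle)
  refine EReal.coe_le_coe_iff.2 ?_
  calc Real.log (μ.real (ball x r)) / Real.log r
      = -Real.log (μ.real (ball x r)) / -Real.log r := (neg_div_neg_eq _ _).symm
    _ ≤ s * N (-Real.log r) / -Real.log r := by gcongr
    _ = s * (N (-Real.log r) / -Real.log r) := mul_div_assoc _ _ _

theorem exists_int_abs_sub_lt_of_floor_ne {a b δ : ℝ} (hδ : |b - a| < δ) (h : ⌊b⌋ ≠ ⌊a⌋) :
    ∃ z : ℤ, |a - z| < δ := by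
  rw [abs_lt] at hδ
  rcases lt_or_gt_of_ne h with hlt | hlt
  · refine ⟨⌊a⌋, abs_lt.2 ⟨?_, ?_⟩⟩ <;> linarith [Int.floor_le a, Int.floor_lt.1 hlt]
  · refine ⟨⌊b⌋, abs_lt.2 ⟨?_, ?_⟩⟩ <;> linarith [Int.floor_le b, Int.floor_lt.1 hlt]

theorem one_third_le_abs_two_pow_div_three_sub_int (n : ℕ) (z : ℤ) :
    1 / 3 ≤ |(2 : ℝ) ^ n / 3 - z| := by
  have hndvd : ¬ (3 : ℤ) ∣ 2 ^ n := fun h => by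
    have := Int.prime_three.dvd_of_dvd_pow h
    omega
  have hne : (2 : ℤ) ^ n - 3 * z ≠ 0 := fun h => hndvd ⟨z, sub_eq_zero.1 h⟩
  have hint : (1 : ℝ) ≤ |(2 : ℝ) ^ n - 3 * (z : ℝ)| := by exact_mod_cast Int.one_le_abs hne
  calc (1 : ℝ) / 3 ≤ |(2 : ℝ) ^ n - 3 * (z : ℝ)| / 3 := by gcongr
    _ = |((2 : ℝ) ^ n - 3 * z) / 3| := by rw [abs_div, abs_of_pos (zero_lt_three' ℝ)]
    _ = |(2 : ℝ) ^ n / 3 - z| := by rw [sub_div, mul_div_cancel_left₀ _ three_ne_zero]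

-- If both grids failed, an integer would lie close to `2 ^ n * X` and another one close to
-- `2 ^ n * X + 2 ^ n / 3`, although `2 ^ n / 3` stays away from the integers.
theorem exists_shift_floor_eq (n : ℕ) (X : ℝ) :
    ∃ s ∈ ({0, 1 / 3} : Finset ℝ), ∀ Y, |Y - X| < 1 / (6 * 2 ^ n) →
      ⌊(2 : ℝ) ^ n * (Y + s)⌋ = ⌊(2 : ℝ) ^ n * (X + s)⌋ := by
  by_contra! hcon
  have near_int (s : ℝ) (hs : s ∈ ({0, 1 / 3} : Finset ℝ)) :
      ∃ z : ℤ, |(2 : ℝ) ^ n * (X + s) - z| < 1 / 6 := by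
    obtain ⟨Y, hY, hne⟩ := hcon s hs
    refine exists_int_abs_sub_lt_of_floor_ne ?_ hne
    rw [← mul_sub, add_sub_add_right_eq_sub, abs_mul, abs_of_pos (by positivity)]
    calc (2 : ℝ) ^ n * |Y - X| < 2 ^ n * (1 / (6 * 2 ^ n)) := by gcongr
      _ = 1 / 6 := by field_simp
  obtain ⟨z, hz⟩ := near_int 0 (by simp)
  obtain ⟨w, hw⟩ := near_int (1 / 3) (by simp)
  have hgap : (2 : ℝ) ^ n / 3 - (w - z : ℤ) =
      (2 ^ n * (X + 1 / 3) - w) - (2 ^ n * (X + 0) - z) := by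
    push_cast
    ring
  have := one_third_le_abs_two_pow_div_three_sub_int n (w - z)
  rw [hgap] at this
  linarith [abs_sub (2 ^ n * (X + 1 / 3) - w) (2 ^ n * (X + 0) - z)]

section Dyadic

variable {d : ℕ}

/-- The address of the dyadic cube of side length `8 / 2 ^ n`, in the grid translated by `-8 • s`,
that contains `x`. Thanks to the factor `8`, a ball of radius `2 ^ (-n)` lies in one cube of
generation `n` for a suitable translate. -/
noncomputable def dyadicIndex (s : Fin d → ℝ) (n : ℕ) (x : EuclideanSpace ℝ (Fin d)) :
    Fin d → ℤ :=
  fun i => ⌊(2 : ℝ) ^ n * (x i / 8 + s i)⌋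

/-- The `2 ^ d` translates used in the one-third trick. -/
noncomputable def thirdShifts (d : ℕ) : Finset (Fin d → ℝ) :=
  Fintype.piFinset fun _ => {0, 1 / 3}

theorem card_thirdShifts (d : ℕ) : (thirdShifts d).card = 2 ^ d := by
  simp [thirdShifts]

theorem measurable_dyadicIndex (s : Fin d → ℝ) (n : ℕ) : Measurable (dyadicIndex s n) := by
  unfold dyadicIndex
  fun_prop

theorem dyadicIndex_add_ediv (s : Fin d → ℝ) (n k : ℕ) (x : EuclideanSpace ℝ (Fin d))
    (i : Fin d) : dyadicIndex s (n + k) x i / 2 ^ k = dyadicIndex s n x i := by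
  have h := Int.natCast_mul_floor_div_cancel (n := 2 ^ k) (by positivity)
    ((2 : ℝ) ^ n * (x i / 8 + s i))
  push_cast at h
  rw [dyadicIndex, dyadicIndex, ← h, pow_add, mul_comm ((2 : ℝ) ^ n), mul_assoc]

theorem dist_le_of_dyadicIndex_eq {s : Fin d → ℝ} {n : ℕ} {x y : EuclideanSpace ℝ (Fin d)}
    (h : dyadicIndex s n x = dyadicIndex s n y) : dist x y ≤ 8 * d / 2 ^ n := by
  have hcoord (i : Fin d) : dist (x i) (y i) ≤ 8 / 2 ^ n := by
    have hlt := Int.abs_sub_lt_one_of_floor_eq_floor (congrFun h i)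
    have hscale : (2 : ℝ) ^ n * (x i / 8 + s i) - 2 ^ n * (y i / 8 + s i) =
        2 ^ n / 8 * (x i - y i) := by ring
    rw [hscale, abs_mul, abs_of_pos (by positivity)] at hlt
    rw [Real.dist_eq, le_div_iff₀ (by positivity)]
    linarith
  calc dist x y = √(∑ i, dist (x i) (y i) ^ 2) := EuclideanSpace.dist_eq x y
    _ ≤ √((∑ i, dist (x i) (y i)) ^ 2) :=
        Real.sqrt_le_sqrt (Finset.sum_sq_le_sq_sum_of_nonneg fun _ _ => dist_nonneg)
    _ = ∑ i, dist (x i) (y i) := Real.sqrt_sq (Finset.sum_nonneg fun _ _ => dist_nonneg)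
    _ ≤ ∑ _ : Fin d, 8 / 2 ^ n := Finset.sum_le_sum fun i _ => hcoord i
    _ = 8 * d / 2 ^ n := by
        rw [Finset.sum_const, Finset.card_univ, Fintype.card_fin, nsmul_eq_mul]
        ring

theorem exists_thirdShift_dyadicIndex_eq (n : ℕ) (x : EuclideanSpace ℝ (Fin d)) :
    ∃ s ∈ thirdShifts d, ∀ y ∈ ball x ((2 : ℝ) ^ (-(n : ℤ))),
      dyadicIndex s n y = dyadicIndex s n x := by
  choose s hs hfloor using fun i => exists_shift_floor_eq n (x i / 8)
  refine ⟨s, Fintype.mem_piFinset.2 hs, fun y hy => funext fun i => hfloor i (y i / 8) ?_⟩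
  have hi : |y i - x i| < 1 / 2 ^ n := by
    rw [← Real.dist_eq, one_div, ← zpow_natCast, ← zpow_neg]
    exact (PiLp.dist_apply_le y x i).trans_lt hy
  rw [← sub_div, abs_div, abs_of_pos (by norm_num : (0 : ℝ) < 8), div_lt_iff₀ (by norm_num)]
  calc |y i - x i| < 1 / 2 ^ n := hi
    _ ≤ 1 / (6 * 2 ^ n) * 8 := by
        rw [div_mul_eq_mul_div, div_le_div_iff₀ (by positivity) (by positivity)]
        linarith [pow_pos (zero_lt_two' ℝ) n]

/-- The dyadic partition of the grid translated by `-8 • s`, restricted to the generations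
`j + n * k`. -/
noncomputable def dyadicPartition (s : Fin d → ℝ) (j k : ℕ) :
    NestedPartition (EuclideanSpace ℝ (Fin d)) (Fin d → ℤ) ((2 ^ k) ^ d) where
  index n := dyadicIndex s (j + n * k)
  measurable_index n := measurable_dyadicIndex s (j + n * k)
  children m := Fintype.piFinset fun i => Finset.Ico (m i * 2 ^ k) (m i * 2 ^ k + 2 ^ k)
  index_succ_mem_children {n x m} := by
    rw [Fintype.mem_piFinset, funext_iff, add_one_mul, ← add_assoc]
    refine forall_congr' fun i => ?_
    rw [Finset.mem_Ico, ← Int.ediv_eq_iff_of_pos (by positivity), dyadicIndex_add_ediv]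
  card_children_le m := by
    have hpow : ((2 : ℤ) ^ k).toNat = 2 ^ k := by exact_mod_cast Int.toNat_natCast (2 ^ k)
    simp [Fintype.card_piFinset, hpow]

theorem dyadicPartition_cell_subset_ball {s : Fin d → ℝ} {j k n : ℕ}
    {x : EuclideanSpace ℝ (Fin d)} {R : ℝ} (hR : 8 * d / 2 ^ (j + n * k) < R) :
    (dyadicPartition s j k).cell n (dyadicIndex s (j + n * k) x) ⊆ ball x R :=
  fun _ hz => (dist_le_of_dyadicIndex_eq hz).trans_lt hR

variable {μ : Measure (EuclideanSpace ℝ (Fin d))} [IsLocallyFiniteMeasure μ]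

theorem measure_dyadicPartition_cell_ne_top (s : Fin d → ℝ) (j k n : ℕ) (m : Fin d → ℤ) :
    μ ((dyadicPartition s j k).cell n m) ≠ ⊤ := by
  rcases ((dyadicPartition s j k).cell n m).eq_empty_or_nonempty with hempty | ⟨x, rfl⟩
  · simp [hempty]
  · exact ((measure_mono (dyadicPartition_cell_subset_ball (lt_add_one _))).trans_lt
      measure_ball_lt_top).ne

end Dyadic

theorem exists_hole_of_lt_porMeas {X : Type*} [MetricSpace X] [MeasurableSpace X] {μ : Measure X}
    {x : X} {r ε α : ℝ} (hr : 0 ≤ r) (hα : α < porMeas μ x r ε) :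
    ∃ y, ball y (α * r) ⊆ ball x r ∧ μ (ball y (α * r)) ≤ ENNReal.ofReal ε * μ (ball x r) := by
  obtain ⟨β, ⟨-, y, hsub, hmass⟩, hαβ⟩ :=
    exists_lt_of_lt_csSup (by exact ⟨0, le_rfl, x, by simp⟩) hα
  have hball : ball y (α * r) ⊆ ball y (β * r) := by gcongr
  exact ⟨y, hball.trans hsub, (measure_mono hball).trans hmass⟩

/-- The scales `i < n` at which `por(μ,x,2^{-i},ε) > α`. -/
noncomputable def porousScales {X : Type*} [MetricSpace X] [MeasurableSpace X]
    (μ : Measure X) (x : X) (α ε : ℝ) (n : ℕ) : Finset ℕ :=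
  (Finset.range n).filter fun i => α < porMeas μ x ((2 : ℝ) ^ (-(i : ℤ))) ε

-- In `IsMeanPorous` the scales range over the image of `Finset.range n` in `ℤ`.
theorem IsMeanPorous.ae_le_liminf_card_porousScales {X : Type*} [MetricSpace X]
    [MeasurableSpace X] {μ : Measure X} {α ρ ε : ℝ} (h : IsMeanPorous μ α ρ) (hε : 0 < ε) :
    ∀ᵐ x ∂μ, ρ ≤ liminf (fun n : ℕ => ((porousScales μ x α ε n).card : ℝ) / n) atTop := by
  have hrange (n : ℕ) : (Finset.range n : Finset ℤ) =
      (Finset.range n).image (fun i : ℕ => (i : ℤ)) := by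
    ext z
    simp
  filter_upwards [h ε hε] with x hx
  simpa only [hrange, Finset.filter_image, porousScales,
    Finset.card_image_of_injective _ (Nat.cast_injective (R := ℤ))] using hx

theorem exists_div_card_mul_le_card_filter {σ : Type*} {S : Finset σ} (hS : S.Nonempty) {k n : ℕ}
    (hk : 0 < k) {B : Finset ℕ} (hB : B ⊆ Finset.range (n * k)) {Q : σ → ℕ → ℕ → Prop}
    (hQ : ∀ l ∈ B, ∃ s ∈ S, Q s (l % k) (l / k)) :
    ∃ s ∈ S, ∃ j ∈ Finset.range k,
      (B.card : ℝ) / (S.card * k) ≤ ((Finset.range n).filter (Q s j)).card := by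
  have : Nonempty σ := ⟨hS.choose⟩
  choose! s hs hQs using hQ
  have hmaps : ∀ l ∈ B, (s l, l % k) ∈ S ×ˢ Finset.range k := fun l hl =>
    Finset.mem_product.2 ⟨hs l hl, Finset.mem_range.2 (Nat.mod_lt l hk)⟩
  have hcount : (S ×ˢ Finset.range k).card • ((B.card : ℝ) / (S.card * k)) ≤ B.card := by
    have : (S.card * k : ℝ) ≠ 0 := by exact_mod_cast (Nat.mul_pos hS.card_pos hk).ne'
    rw [Finset.card_product, Finset.card_range, nsmul_eq_mul, Nat.cast_mul, mul_div_cancel₀ _ this]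
  obtain ⟨⟨t, j⟩, htj, hcard⟩ := Finset.exists_le_card_fiber_of_nsmul_le_card_of_maps_to hmaps
    (hS.product (Finset.nonempty_range_iff.2 hk.ne')) hcount
  obtain ⟨ht, hj⟩ := Finset.mem_product.1 htj
  have hfiber {l : ℕ} (hl : l ∈ B.filter fun l => (s l, l % k) = (t, j)) :
      l ∈ B ∧ s l = t ∧ l % k = j := by
    simpa using hl
  refine ⟨t, ht, j, hj, hcard.trans ?_⟩
  refine Nat.cast_le.2 (Finset.card_le_card_of_injOn (· / k) (fun l hl => ?_)
    fun l hl l' hl' h => ?_)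
  · obtain ⟨hlB, rfl, rfl⟩ := hfiber hl
    have hlt : l / k < n := Nat.div_lt_of_lt_mul (mul_comm n k ▸ Finset.mem_range.1 (hB hlB))
    exact Finset.mem_filter.2 ⟨Finset.mem_range.2 hlt, hQs l hlB⟩
  · have hmod : l % k = l' % k := (hfiber hl).2.2.trans (hfiber hl').2.2.symm
    rw [← Nat.mod_add_div' l k, ← Nat.mod_add_div' l' k, hmod]
    exact congrArg (l' % k + · * k) h

section Porous

variable {d : ℕ} {μ : Measure (EuclideanSpace ℝ (Fin d))} [IsLocallyFiniteMeasure μ]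

theorem exists_hasSparseChild_of_lt_porMeas {x : EuclideanSpace ℝ (Fin d)} {α ε δ : ℝ} {i j k : ℕ}
    (hδ : 0 ≤ δ) (hε : ε ≤ δ) (hα : 0 < α) (hk : 8 * d < α * 2 ^ k)
    (hpor : α < porMeas μ x ((2 : ℝ) ^ (-((j + i * k : ℕ) : ℤ))) ε) :
    ∃ s ∈ thirdShifts d,
      (dyadicPartition s j k).HasSparseChild μ δ i (dyadicIndex s (j + i * k) x) := by
  obtain ⟨y, hsub, hmass⟩ := exists_hole_of_lt_porMeas (by positivity) hpor
  obtain ⟨s, hs, hindex⟩ := exists_thirdShift_dyadicIndex_eq (j + i * k) x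
  set r : ℝ := 2 ^ (-((j + i * k : ℕ) : ℤ)) with hr
  set T := dyadicPartition s j k
  have hy : y ∈ ball x r := hsub (mem_ball_self (by positivity))
  have hchild : T.cell (i + 1) (dyadicIndex s (j + (i + 1) * k) y) ⊆ ball y (α * r) := by
    refine dyadicPartition_cell_subset_ball ?_
    calc 8 * d / (2 : ℝ) ^ (j + (i + 1) * k) = 8 * d / 2 ^ k / 2 ^ (j + i * k) := by
          rw [div_div, ← pow_add]
          congr 2
          ring
      _ < α / 2 ^ (j + i * k) := by
          gcongr
          exact (div_lt_iff₀ (by positivity)).2 hk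
      _ = α * r := by rw [hr, zpow_neg, zpow_natCast, div_eq_mul_inv]
  have hparent : ball x r ⊆ T.cell i (dyadicIndex s (j + i * k) x) := hindex
  have hfin := measure_dyadicPartition_cell_ne_top (μ := μ) s j k i (dyadicIndex s (j + i * k) x)
  refine ⟨s, hs, dyadicIndex s (j + (i + 1) * k) y, T.index_succ_mem_children.2 (hindex y hy), ?_⟩
  rw [← ENNReal.toReal_ofReal hδ, Measure.real, Measure.real, ← ENNReal.toReal_mul]
  refine ENNReal.toReal_mono (ENNReal.mul_ne_top ENNReal.ofReal_ne_top hfin) ?_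
  exact (measure_mono hchild).trans (hmass.trans (by gcongr))

theorem exists_div_le_card_hasSparseChild {x : EuclideanSpace ℝ (Fin d)} {α ε δ : ℝ} {k : ℕ}
    (hδ : 0 ≤ δ) (hε : ε ≤ δ) (hα : 0 < α) (hk₀ : 0 < k) (hk : 8 * d < α * 2 ^ k) (n : ℕ) :
    ∃ s ∈ thirdShifts d, ∃ j ∈ Finset.range k,
      ((porousScales μ x α ε (n * k)).card : ℝ) / (2 ^ d * k) ≤ ((Finset.range n).filter fun i =>
        (dyadicPartition s j k).HasSparseChild μ δ i ((dyadicPartition s j k).index i x)).card := by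
  have hS : (thirdShifts d).Nonempty := Finset.card_pos.1 (by simp [card_thirdShifts])
  have hcard : ((thirdShifts d).card : ℝ) = 2 ^ d := by simp [card_thirdShifts]
  rw [← hcard]
  refine exists_div_card_mul_le_card_filter hS hk₀ (Finset.filter_subset _ _) fun l hl => ?_
  refine exists_hasSparseChild_of_lt_porMeas hδ hε hα hk ?_
  rw [Nat.mod_add_div']
  exact (Finset.mem_filter.1 hl).2

theorem eventually_exists_mul_le_card_hasSparseChild {x : EuclideanSpace ℝ (Fin d)}
    {α ε δ ρ : ℝ} {k : ℕ} (hδ : 0 ≤ δ) (hε : ε ≤ δ) (hα : 0 < α) (hρ : 0 < ρ) (hk₀ : 0 < k)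
    (hk : 8 * d < α * 2 ^ k)
    (h : ρ ≤ liminf (fun n : ℕ => ((porousScales μ x α ε n).card : ℝ) / n) atTop) :
    ∀ᶠ n : ℕ in atTop, ∃ s ∈ thirdShifts d, ∃ j ∈ Finset.range k,
      ρ / 2 ^ (d + 1) * n ≤ ((Finset.range n).filter fun i =>
        (dyadicPartition s j k).HasSparseChild μ δ i ((dyadicPartition s j k).index i x)).card := by
  have hscales : ∀ᶠ n : ℕ in atTop,
      ρ / 2 < ((porousScales μ x α ε (n * k)).card : ℝ) / (n * k : ℕ) :=
    (tendsto_id.atTop_mul_const' hk₀).eventually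
      (eventually_lt_of_lt_liminf ((half_lt_self hρ).trans_le h)
        (isBoundedUnder_of ⟨0, fun n => by positivity⟩))
  filter_upwards [hscales] with n hn
  obtain ⟨s, hs, j, hj, hcard⟩ :=
    exists_div_le_card_hasSparseChild (μ := μ) (x := x) hδ hε hα hk₀ hk n
  refine ⟨s, hs, j, hj, ?_⟩
  calc ρ / 2 ^ (d + 1) * n = ρ / 2 * (n * k : ℕ) / (2 ^ d * k) := by
        push_cast
        field_simp
        ring
    _ ≤ ((porousScales μ x α ε (n * k)).card : ℝ) / (2 ^ d * k) := by
        gcongr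
        exact mul_le_of_le_div₀ (Nat.cast_nonneg _) (Nat.cast_nonneg _) hn.le
    _ ≤ _ := hcard

theorem ae_eventually_exp_le_pow_mul_measureReal_ball {α ε ρ : ℝ} {k : ℕ}
    (hε : ε ≤ 1 / (8 * ((2 ^ k) ^ d : ℕ))) (hα : 0 < α) (hρ : 0 < ρ) (hk₀ : 0 < k)
    (hk : 8 * d < α * 2 ^ k)
    (h : ∀ᵐ x ∂μ, ρ ≤ liminf (fun n : ℕ => ((porousScales μ x α ε n).card : ℝ) / n) atTop) :
    ∀ᵐ x ∂μ, ∀ᶠ n : ℕ in atTop, Real.exp (ρ / (2 ^ (d + 4) * ((2 ^ k) ^ d : ℕ)) * n) ≤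
      ((2 ^ k) ^ d : ℕ) ^ n * μ.real (ball x ((8 * d + 1) / (2 ^ k) ^ n)) := by
  set N : ℕ := (2 ^ k) ^ d
  have hN : 0 < N := by positivity
  have : NeZero N := ⟨hN.ne'⟩
  have hgain : ∀ᵐ x ∂μ, ∀ s ∈ thirdShifts d, ∀ j ∈ Finset.range k, ∀ᶠ n : ℕ in atTop,
      Real.exp (1 / (4 * N) * ((Finset.range n).filter fun i =>
          (dyadicPartition s j k).HasSparseChild μ (1 / (8 * N)) i
            ((dyadicPartition s j k).index i x)).card - ρ / (2 ^ (d + 4) * N) * n) ≤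
        (N : ℝ) ^ n * μ.real ((dyadicPartition s j k).cell n (dyadicIndex s (j + n * k) x)) :=
    (ae_ball_iff (thirdShifts d).countable_toSet).2 fun s _ =>
      (ae_ball_iff (Finset.range k).countable_toSet).2 fun j _ =>
        NestedPartition.ae_eventually_exp_le_pow_mul_measureReal_cell
          (measure_dyadicPartition_cell_ne_top s j k) (by positivity)
  filter_upwards [h, hgain] with x hx hgain
  simp only [← eventually_all_finset] at hgain
  filter_upwards [eventually_exists_mul_le_card_hasSparseChild (by positivity) hε hα hρ hk₀ hk hx,
    hgain] with n ⟨s, hs, j, hj, hcount⟩ hgain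
  have hradius : 8 * d / (2 : ℝ) ^ (j + n * k) < (8 * d + 1) / (2 ^ k) ^ n := by
    rw [← pow_mul, mul_comm k]
    gcongr
    · exact lt_add_one _
    · exact one_le_two
    · exact Nat.le_add_left _ j
  calc Real.exp (ρ / (2 ^ (d + 4) * N) * n)
      = Real.exp (1 / (4 * N) * (ρ / 2 ^ (d + 1) * n) - ρ / (2 ^ (d + 4) * N) * n) := by
        congr 1
        field_simp
        ring
    _ ≤ _ := Real.exp_le_exp.2 (by gcongr)
    _ ≤ N ^ n * μ.real ((dyadicPartition s j k).cell n (dyadicIndex s (j + n * k) x)) :=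
        hgain s hs j hj
    _ ≤ N ^ n * μ.real (ball x ((8 * d + 1) / (2 ^ k) ^ n)) := by
        gcongr
        · exact measure_ball_lt_top.ne
        · exact dyadicPartition_cell_subset_ball hradius

theorem upperPackingDim_le_sub_of_ae_le_liminf {α ε ρ : ℝ} {k : ℕ}
    (hε : ε ≤ 1 / (8 * ((2 ^ k) ^ d : ℕ))) (hα : 0 < α) (hρ : 0 < ρ) (hk₀ : 0 < k)
    (hk : 8 * d < α * 2 ^ k)
    (h : ∀ᵐ x ∂μ, ρ ≤ liminf (fun n : ℕ => ((porousScales μ x α ε n).card : ℝ) / n) atTop) :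
    upperPackingDim μ ≤
      ((d - ρ / (2 ^ (d + 4) * (2 ^ k) ^ d * (k * Real.log 2)) : ℝ) : EReal) := by
  have hlog : Real.log (2 ^ k) = k * Real.log 2 := Real.log_pow 2 k
  refine essSup_le_of_ae_le _ ?_
  filter_upwards [ae_eventually_exp_le_pow_mul_measureReal_ball hε hα hρ hk₀ hk h] with x hx
  have hdim : (d : ℝ) - ρ / (2 ^ (d + 4) * (2 ^ k) ^ d * (k * Real.log 2)) =
      (d * Real.log (2 ^ k) - ρ / (2 ^ (d + 4) * (2 ^ k) ^ d)) / Real.log (2 ^ k) := by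
    rw [hlog]
    field_simp
  rw [hdim]
  refine upperLocalDim_le_of_eventually_exp_neg_le (D := 8 * d + 1)
    (one_lt_pow₀ one_lt_two hk₀.ne') ?_
  filter_upwards [hx] with n hn
  push_cast at hn
  have hvol : (((2 : ℝ) ^ k) ^ d) ^ n = Real.exp (d * Real.log (2 ^ k) * n) := by
    rw [mul_comm, Real.exp_nat_mul, Real.exp_nat_mul, Real.exp_log (by positivity)]
  rw [hvol, ← div_le_iff₀' (Real.exp_pos _), ← Real.exp_sub, ← sub_mul, ← neg_sub, neg_mul] at hn
  exact hn

end Porous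

theorem exists_nat_lt_mul_two_pow_and_mul_two_pow_le {α B : ℝ} (hα : α ∈ Ioc (0 : ℝ) (1 / 2))
    (hB : 1 ≤ B) :
    ∃ k : ℕ, 0 < k ∧ B < α * 2 ^ k ∧ α * 2 ^ k ≤ 2 * B ∧
      k ≤ (1 + Real.logb 2 (2 * B)) * |Real.logb 2 α| := by
  have hα₀ : 0 < α := hα.1
  obtain ⟨n, hle, hlt⟩ := exists_nat_pow_near
    ((one_le_div hα₀).2 ((hα.2.trans one_half_lt_one.le).trans hB)) one_lt_two
  rw [le_div_iff₀' hα₀] at hle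
  rw [div_lt_iff₀' hα₀] at hlt
  have hupper : α * 2 ^ (n + 1) ≤ 2 * B := by
    rw [pow_succ]
    linarith
  refine ⟨n + 1, n.succ_pos, hlt, hupper, ?_⟩
  have hlogα : 1 ≤ -Real.logb 2 α := by
    rw [le_neg, Real.logb_le_iff_le_rpow one_lt_two hα₀, Real.rpow_neg_one, ← one_div]
    exact hα.2
  have hlogB : 0 ≤ Real.logb 2 (2 * B) := Real.logb_nonneg one_lt_two (by linarith)
  have hk : ((n + 1 : ℕ) : ℝ) ≤ Real.logb 2 (2 * B) - Real.logb 2 α := by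
    rw [← Real.logb_div (by positivity) hα₀.ne',
      Real.le_logb_iff_rpow_le one_lt_two (by positivity), Real.rpow_natCast, le_div_iff₀' hα₀]
    exact hupper
  rw [abs_of_nonpos (by linarith)]
  nlinarith

theorem stmt9_general (d : ℕ) :
    ∃ C c : ℝ, 0 < C ∧ 0 < c ∧ ∀ α ρ : ℝ, α ∈ Set.Ioc (0 : ℝ) (1 / 2) → 0 < ρ →
      ∀ (μ : Measure (EuclideanSpace ℝ (Fin d))) [IsLocallyFiniteMeasure μ],
        (∀ᵐ x ∂μ, ρ ≤ liminf
          (fun n : ℕ => ((porousScales μ x α (c * α ^ d) n).card : ℝ) / n) atTop) →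
        upperPackingDim μ ≤ ((d - C * ρ * α ^ d / |Real.logb 2 α| : ℝ) : EReal) := by
  set B : ℝ := 8 * d + 1
  have hB : 1 ≤ B := le_add_of_nonneg_left (by positivity)
  set L : ℝ := 1 + Real.logb 2 (2 * B)
  have hL : 0 < L := by
    have := Real.logb_nonneg one_lt_two (by linarith : 1 ≤ 2 * B)
    positivity
  refine ⟨1 / (2 ^ (d + 4) * (2 * B) ^ d * (L * Real.log 2)), 1 / (8 * (2 * B) ^ d),
    by positivity, by positivity, fun α ρ hα hρ μ _ h => ?_⟩
  have hα₀ : 0 < α := hα.1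
  obtain ⟨k, hk₀, hlow, hupp, hk⟩ := exists_nat_lt_mul_two_pow_and_mul_two_pow_le hα hB
  have hN : ((2 : ℝ) ^ k) ^ d ≤ (2 * B) ^ d / α ^ d := by
    rw [← div_pow]
    gcongr
    exact (le_div_iff₀' hα₀).2 hupp
  have hε : 1 / (8 * (2 * B) ^ d) * α ^ d ≤ 1 / (8 * ((2 ^ k) ^ d : ℕ)) := by
    push_cast
    calc 1 / (8 * (2 * B) ^ d) * α ^ d = 1 / (8 * ((2 * B) ^ d / α ^ d)) := by field_simp
      _ ≤ 1 / (8 * ((2 : ℝ) ^ k) ^ d) := by gcongr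
  refine (upperPackingDim_le_sub_of_ae_le_liminf hε hα₀ hρ hk₀
    ((lt_add_one _).trans hlow) h).trans (EReal.coe_le_coe_iff.2 (sub_le_sub_left ?_ _))
  calc 1 / (2 ^ (d + 4) * (2 * B) ^ d * (L * Real.log 2)) * ρ * α ^ d / |Real.logb 2 α|
      = ρ / (2 ^ (d + 4) * ((2 * B) ^ d / α ^ d) * (L * |Real.logb 2 α| * Real.log 2)) := by
        field_simp
    _ ≤ ρ / (2 ^ (d + 4) * ((2 : ℝ) ^ k) ^ d * (k * Real.log 2)) := by
        have : (0 : ℝ) < k := by exact_mod_cast hk₀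
        gcongr

/-- (Small-porosity bound with a logarithmic loss.) For every `d` there
is a constant `C_d > 0` such that every mean `(α,ρ)`-porous Borel probability measure on
`ℝ^d` (with `α ∈ (0,1/2]`, `ρ ∈ (0,1]`) has upper packing dimension at most
`d − C_d·ρ·α^d/|log α|`. -/
theorem stmt9 (d : ℕ) (hd : 0 < d) :
    ∃ C : ℝ, 0 < C ∧ ∀ α ρ : ℝ, α ∈ Set.Ioc (0 : ℝ) (1 / 2) → ρ ∈ Set.Ioc (0 : ℝ) 1 →
      ∀ μ : Measure (EuclideanSpace ℝ (Fin d)), IsProbabilityMeasure μ →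
        IsMeanPorous μ α ρ →
          upperPackingDim μ ≤
            (((d : ℝ) - C * ρ * α ^ d / |Real.logb 2 α| : ℝ) : EReal) := by
  obtain ⟨C, c, hC, hc, h⟩ := stmt9_general d
  exact ⟨C, hC, fun α ρ hα hρ μ _ hμ => h α ρ hα hρ.1 μ <|
    hμ.ae_le_liminf_card_porousScales (mul_pos hc (pow_pos hα.1 d))⟩
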